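/- Let j be a nonnegative integer and z > 0 a real number. Then |H_j(z)| ≤ (2^{j+1} · z^{j+1} / √π) · ∫₀^∞ (1 + t²)^{j/2} · e^{−z²t²} dt, where H_j is the j-th physicist's Hermite polynomial. -/

import Mathlib

open MeasureTheory

/-- The `j`-th physicist's Hermite polynomial, `H_j(x) = 2^{j/2}·he_j(√2 x)` where `he_j`
is the probabilist's Hermite polynomial. -/
noncomputable def physHermite (j : ℕ) (x : ℝ) : ℝ :=
  (2 : ℝ) ^ ((j : ℝ) / 2) * Polynomial.aeval (Real.sqrt 2 * x) (Polynomial.hermite j)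

/-!
With `Z` a standard Gaussian variable, `he_n(w) = 𝔼[(w + iZ)ⁿ]`: by Stein's lemma
`𝔼[Z f(Z)] = 𝔼[f'(Z)]`, the right-hand side satisfies the three-term recurrence of the Hermite
polynomials. Rescaling to variance `1 / 2` gives `H_n(x) = 2ⁿ π^{-1/2} ∫ (x + it)ⁿ e^{-t²} dt`.
The absolute value of the integrand is even in `t`, which bounds `|H_n(x)|` by an integral over the
half-line; for `x = z > 0`, substitute `zt` for `t`.
-/

section Hermite

open Polynomial

theorem derivative_hermite_succ (n : ℕ) :
    derivative (hermite (n + 1)) = (n + 1) * hermite n := by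
  induction n with
  | zero => simp
  | succ n ih =>
    rw [hermite_succ (n + 1), derivative_sub, derivative_mul, ih, hermite_succ n]
    simp only [derivative_X, derivative_mul, derivative_add, derivative_natCast, derivative_one]
    push_cast
    ring

end Hermite

section Gaussian

open ProbabilityTheory
open scoped NNReal

variable {E : Type*} [NormedAddCommGroup E] [NormedSpace ℝ E] {μ : ℝ} {v : ℝ≥0}

theorem hasDerivAt_gaussianPDFReal (μ : ℝ) (v : ℝ≥0) (x : ℝ) :
    HasDerivAt (gaussianPDFReal μ v) (-((x - μ) / v) * gaussianPDFReal μ v x) x := by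
  have hexponent : HasDerivAt (fun x => -(x - μ) ^ 2 / (2 * v)) (-((x - μ) / v)) x := by
    refine ((((hasDerivAt_id x).sub_const μ).pow 2).neg.div_const (2 * v : ℝ)).congr_deriv ?_
    simp only [id_eq, Nat.cast_ofNat, Nat.add_one_sub_one, pow_one, mul_one]
    rw [neg_div, mul_div_mul_left _ _ two_ne_zero]
  refine (hexponent.exp.const_mul (√(2 * Real.pi * v))⁻¹).congr_deriv ?_
  rw [gaussianPDFReal]
  ring

theorem integrable_gaussianReal_iff (hv : v ≠ 0) {f : ℝ → E} :
    Integrable f (gaussianReal μ v) ↔ Integrable fun x => gaussianPDFReal μ v x • f x := by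
  rw [gaussianReal_of_var_ne_zero μ hv, integrable_withDensity_iff_integrable_smul'
    (measurable_gaussianPDF μ v) (ae_of_all _ fun _ => gaussianPDF_lt_top)]
  simp only [toReal_gaussianPDF]

theorem integral_sub_smul_gaussianReal_of_hasDerivAt {f f' : ℝ → E}
    (hderiv : ∀ x, HasDerivAt f (f' x) x)
    (hf : Integrable f (gaussianReal μ v)) (hf' : Integrable f' (gaussianReal μ v))
    (hxf : Integrable (fun x => (x - μ) • f x) (gaussianReal μ v)) :
    ∫ x, (x - μ) • f x ∂gaussianReal μ v = (v : ℝ) • ∫ x, f' x ∂gaussianReal μ v := by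
  obtain rfl | hv := eq_or_ne v 0
  · by_cases hE : CompleteSpace E
    · simp
    · simp [integral, hE]
  have hv' : (v : ℝ) ≠ 0 := NNReal.coe_ne_zero.mpr hv
  have hderiv_mul (x : ℝ) : HasDerivAt (fun x => gaussianPDFReal μ v x • f x)
      (gaussianPDFReal μ v x • (f' x - (v : ℝ)⁻¹ • (x - μ) • f x)) x := by
    refine ((hasDerivAt_gaussianPDFReal μ v x).smul (hderiv x)).congr_deriv ?_
    module
  have hxf_smul := hxf.fun_smul (v : ℝ)⁻¹
  have hzero := integral_eq_zero_of_hasDerivAt_of_integrable hderiv_mul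
    ((integrable_gaussianReal_iff hv).mp (hf'.sub hxf_smul))
    ((integrable_gaussianReal_iff hv).mp hf)
  rw [← integral_gaussianReal_eq_integral_smul hv, integral_sub hf' hxf_smul, integral_smul,
    sub_eq_zero] at hzero
  rw [hzero, smul_inv_smul₀ hv']

theorem integrable_add_mul_I_pow_gaussianReal (μ : ℝ) (v : ℝ≥0) (w : ℂ) (n : ℕ) :
    Integrable (fun y : ℝ => (w + y * Complex.I) ^ n) (gaussianReal μ v) := by
  have hmemLp : MemLp (fun y : ℝ => w + y * Complex.I) n (gaussianReal μ v) :=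
    (memLp_const w).add ((memLp_id_gaussianReal' n (ENNReal.natCast_ne_top n)).ofReal.mul_const _)
  refine (integrable_norm_iff (by fun_prop)).mp ?_
  simpa only [norm_pow] using hmemLp.integrable_norm_pow'

theorem integrable_mul_add_mul_I_pow_gaussianReal (μ : ℝ) (v : ℝ≥0) (w : ℂ) (n : ℕ) :
    Integrable (fun y : ℝ => y * (w + y * Complex.I) ^ n) (gaussianReal μ v) := by
  have hpow_int := integrable_add_mul_I_pow_gaussianReal μ v w
  refine (((hpow_int (n + 1)).sub ((hpow_int n).const_mul w)).const_mul (-Complex.I)).congr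
    (ae_of_all _ fun y => ?_)
  simp only [Pi.sub_apply]
  linear_combination (-y * (w + y * Complex.I) ^ n) * Complex.I_sq

theorem hasDerivAt_add_mul_I_pow (w : ℂ) (n : ℕ) (y : ℝ) :
    HasDerivAt (fun y : ℝ => (w + y * Complex.I) ^ n)
      (n * Complex.I * (w + y * Complex.I) ^ (n - 1)) y := by
  have hbase : HasDerivAt (fun y : ℝ => w + y * Complex.I) Complex.I y := by
    simpa using (Complex.ofRealCLM.hasDerivAt.mul_const Complex.I).const_add w
  exact (hbase.pow n).congr_deriv (mul_right_comm _ _ _)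

theorem integral_mul_add_mul_I_pow_gaussianReal (v : ℝ≥0) (w : ℂ) (n : ℕ) :
    ∫ y, y * (w + y * Complex.I) ^ n ∂gaussianReal 0 v =
      v * (n * Complex.I * ∫ y, (w + y * Complex.I) ^ (n - 1) ∂gaussianReal 0 v) := by
  have hstein := integral_sub_smul_gaussianReal_of_hasDerivAt (μ := 0) (v := v)
    (hasDerivAt_add_mul_I_pow w n)
    (integrable_add_mul_I_pow_gaussianReal 0 v w n)
    ((integrable_add_mul_I_pow_gaussianReal 0 v w (n - 1)).const_mul _)
    (by simpa using integrable_mul_add_mul_I_pow_gaussianReal 0 v w n)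
  simpa only [sub_zero, Complex.real_smul, integral_const_mul] using hstein

theorem integral_add_mul_I_pow_succ_gaussianReal (v : ℝ≥0) (w : ℂ) (n : ℕ) :
    ∫ y, (w + y * Complex.I) ^ (n + 1) ∂gaussianReal 0 v =
      w * ∫ y, (w + y * Complex.I) ^ n ∂gaussianReal 0 v
        - v * n * ∫ y, (w + y * Complex.I) ^ (n - 1) ∂gaussianReal 0 v := by
  have hsplit (y : ℝ) : (w + y * Complex.I) ^ (n + 1) =
      w * (w + y * Complex.I) ^ n + Complex.I * (y * (w + y * Complex.I) ^ n) := by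
    ring
  simp only [hsplit]
  rw [integral_add ((integrable_add_mul_I_pow_gaussianReal 0 v w n).const_mul w)
      ((integrable_mul_add_mul_I_pow_gaussianReal 0 v w n).const_mul Complex.I),
    integral_const_mul, integral_const_mul, integral_mul_add_mul_I_pow_gaussianReal]
  linear_combination
    (v * n * ∫ y, (w + y * Complex.I) ^ (n - 1) ∂gaussianReal 0 v) * Complex.I_sq

theorem aeval_hermite_eq_integral_gaussianReal (n : ℕ) (w : ℂ) :
    Polynomial.aeval w (Polynomial.hermite n) =
      ∫ y, (w + y * Complex.I) ^ n ∂gaussianReal 0 1 := by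
  induction n using Nat.twoStepInduction with
  | zero => simp
  | one => simpa using (integral_add_mul_I_pow_succ_gaussianReal 1 w 0).symm
  | more n ih₀ ih₁ =>
    rw [integral_add_mul_I_pow_succ_gaussianReal, Nat.add_sub_cancel, ← ih₀, ← ih₁,
      Polynomial.hermite_succ (n + 1), derivative_hermite_succ]
    simp

theorem integral_gaussianReal_zero_half (f : ℝ → E) :
    ∫ y, f y ∂gaussianReal 0 (1 / 2) = (√Real.pi)⁻¹ • ∫ y, Real.exp (-y ^ 2) • f y := by
  have hpdf (y : ℝ) : gaussianPDFReal 0 (1 / 2) y = (√Real.pi)⁻¹ * Real.exp (-y ^ 2) := by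
    have hvar : 2 * ((1 / 2 : ℝ≥0) : ℝ) = 1 := by norm_num
    rw [gaussianPDFReal, mul_right_comm, hvar, one_mul, div_one, sub_zero]
  simp only [integral_gaussianReal_eq_integral_smul (one_div_ne_zero two_ne_zero), hpdf, mul_smul,
    integral_smul]

end Gaussian

section PhysHermite

open ProbabilityTheory

theorem physHermite_eq_integral_gaussianReal (j : ℕ) (x : ℝ) :
    (physHermite j x : ℂ) = 2 ^ j * ∫ y, (x + y * Complex.I) ^ j ∂gaussianReal 0 (1 / 2) := by
  have hmap : gaussianReal 0 1 = (gaussianReal 0 (1 / 2)).map (√2 * ·) := by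
    rw [gaussianReal_map_const_mul]
    congr 1
    · simp
    · ext; simp
  have hsqrt : (√2 : ℂ) * √2 = 2 := mod_cast Real.mul_self_sqrt zero_le_two
  have hscale (y : ℝ) : ((√2 * x : ℝ) + (√2 * y : ℝ) * Complex.I) ^ j =
      (√2 : ℂ) ^ j * (x + y * Complex.I) ^ j := by
    rw [← mul_pow]
    push_cast
    ring
  have haeval : ((Polynomial.aeval (√2 * x) (Polynomial.hermite j) : ℝ) : ℂ) =
      Polynomial.aeval ((√2 * x : ℝ) : ℂ) (Polynomial.hermite j) :=
    (Polynomial.aeval_algebraMap_apply ℂ (√2 * x) (Polynomial.hermite j)).symm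
  rw [physHermite, Real.rpow_div_two_eq_sqrt _ zero_le_two, Real.rpow_natCast, Complex.ofReal_mul,
    haeval, aeval_hermite_eq_integral_gaussianReal, hmap,
    integral_map (by fun_prop) (by fun_prop)]
  simp only [hscale]
  rw [integral_const_mul, ← mul_assoc, Complex.ofReal_pow, ← mul_pow, hsqrt]

theorem norm_add_mul_I_pow (x y : ℝ) (n : ℕ) :
    ‖(x + y * Complex.I) ^ n‖ = (x ^ 2 + y ^ 2) ^ ((n : ℝ) / 2) := by
  rw [norm_pow, Complex.norm_add_mul_I, Real.rpow_div_two_eq_sqrt _ (by positivity),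
    Real.rpow_natCast]

theorem stmt13_general (j : ℕ) (x : ℝ) :
    |physHermite j x| ≤
      2 ^ (j + 1) / √Real.pi *
        ∫ t in Set.Ioi (0 : ℝ), (x ^ 2 + t ^ 2) ^ ((j : ℝ) / 2) * Real.exp (-t ^ 2) := by
  have heven := integral_comp_abs
    (f := fun t : ℝ => (x ^ 2 + t ^ 2) ^ ((j : ℝ) / 2) * Real.exp (-t ^ 2))
  simp only [sq_abs] at heven
  calc |physHermite j x|
      = 2 ^ j * ‖∫ y, (x + y * Complex.I) ^ j ∂gaussianReal 0 (1 / 2)‖ := by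
        rw [← Real.norm_eq_abs, ← Complex.norm_real, physHermite_eq_integral_gaussianReal,
          norm_mul, norm_pow, Complex.norm_two]
    _ ≤ 2 ^ j * ∫ y, (x ^ 2 + y ^ 2) ^ ((j : ℝ) / 2) ∂gaussianReal 0 (1 / 2) := by
        simp only [← norm_add_mul_I_pow]
        gcongr
        exact norm_integral_le_integral_norm _
    _ = 2 ^ j * ((√Real.pi)⁻¹ * ∫ t, (x ^ 2 + t ^ 2) ^ ((j : ℝ) / 2) * Real.exp (-t ^ 2)) := by
        simp only [integral_gaussianReal_zero_half, smul_eq_mul, mul_comm (Real.exp _)]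
    _ = _ := by
        rw [heven]
        ring

theorem integral_Ioi_sq_add_sq_rpow_mul_exp_neg_sq {z : ℝ} (hz : 0 < z) (s : ℝ) :
    ∫ t in Set.Ioi (0 : ℝ), (z ^ 2 + t ^ 2) ^ (s / 2) * Real.exp (-t ^ 2) =
      z ^ (s + 1) *
        ∫ t in Set.Ioi (0 : ℝ), (1 + t ^ 2) ^ (s / 2) * Real.exp (-z ^ 2 * t ^ 2) := by
  have hscale (t : ℝ) : (z ^ 2 + (z * t) ^ 2) ^ (s / 2) * Real.exp (-(z * t) ^ 2) =
      z ^ s * ((1 + t ^ 2) ^ (s / 2) * Real.exp (-z ^ 2 * t ^ 2)) := by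
    have hfactor : z ^ 2 + (z * t) ^ 2 = z ^ 2 * (1 + t ^ 2) := by ring
    have hpow : (z ^ 2) ^ (s / 2) = z ^ s := by
      rw [← Real.rpow_natCast_mul hz.le, Nat.cast_ofNat, mul_div_cancel₀ s two_ne_zero]
    rw [hfactor, Real.mul_rpow (by positivity) (by positivity), hpow, mul_assoc, mul_pow,
      neg_mul]
  have hsubst := integral_comp_mul_left_Ioi'
    (fun t => (z ^ 2 + t ^ 2) ^ (s / 2) * Real.exp (-t ^ 2)) 0 hz
  simp only [hscale, mul_zero, integral_const_mul, smul_eq_mul] at hsubst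
  rw [← hsubst, Real.rpow_add_one hz.ne']
  ring

end PhysHermite

/-- For `z > 0`, `|H_j(z)| ≤ (2^{j+1} z^{j+1}/√π) ∫₀^∞ (1+t²)^{j/2} e^{−z²t²} dt`. -/
theorem stmt13 (j : ℕ) (z : ℝ) (hz : 0 < z) :
    |physHermite j z|
      ≤ (2 ^ (j + 1) * z ^ (j + 1) / Real.sqrt Real.pi)
          * ∫ t in Set.Ioi (0 : ℝ), (1 + t ^ 2) ^ ((j : ℝ) / 2) * Real.exp (-z ^ 2 * t ^ 2) := by
  convert stmt13_general j z using 1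
  rw [integral_Ioi_sq_add_sq_rpow_mul_exp_neg_sq hz, ← Nat.cast_add_one, Real.rpow_natCast]
  ring
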